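/- arXiv:1006.0920 — 2 statements merged into one kernel-verified Lean document; each statement's English description precedes it below -/
import Mathlib

section
/- Let G be a group containing an element of infinite order and such that H₂(G;ℤ) is a finitely generated abelian group. Then the quotient B₃(G)/∂₄(B₄(G)) is not a finitely generated abelian group. -/
open FreeAbelianGroup

/-- Degree-2 bar differential: `∂₂(g₁|g₂) = (g₂) − (g₁g₂) + (g₁)`. -/
def barD2 (G : Type*) [Group G] : FreeAbelianGroup (G × G) →+ FreeAbelianGroup G :=
  FreeAbelianGroup.lift fun p => of p.2 - of (p.1 * p.2) + of p.1

/-- Degree-3 bar differential. -/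
def barD3 (G : Type*) [Group G] : FreeAbelianGroup (G × G × G) →+ FreeAbelianGroup (G × G) :=
  FreeAbelianGroup.lift fun p =>
    of (p.2.1, p.2.2) - of (p.1 * p.2.1, p.2.2) + of (p.1, p.2.1 * p.2.2) - of (p.1, p.2.1)

/-- Degree-4 bar differential. -/
def barD4 (G : Type*) [Group G] :
    FreeAbelianGroup (G × G × G × G) →+ FreeAbelianGroup (G × G × G) :=
  FreeAbelianGroup.lift fun p =>
    of (p.2.1, p.2.2.1, p.2.2.2) - of (p.1 * p.2.1, p.2.2.1, p.2.2.2)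
      + of (p.1, p.2.1 * p.2.2.1, p.2.2.2) - of (p.1, p.2.1, p.2.2.1 * p.2.2.2)
      + of (p.1, p.2.1, p.2.2.1)

/-- `H₂(G;ℤ)`: 2-cycles of the bar complex modulo the boundaries `∂₃(B₃(G))`. -/
def barH2 (G : Type*) [Group G] :=
  (barD2 G).ker ⧸ ((barD3 G).range.addSubgroupOf (barD2 G).ker)

instance (G : Type*) [Group G] : AddCommGroup (barH2 G) :=
  QuotientAddGroup.Quotient.addCommGroup _

/-!
The differential `∂₃` descends to `B₃(G)/∂₄(B₄(G))`, so if this quotient were finitely generated,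
then `∂₃(B₃(G))` would be too, and only finitely many pairs would occur in its elements. But already
the degenerate chains `(1|1|g)` have boundary `(1|g) - (1|1)`, so every pair `(1, g)` with `g ≠ 1`
occurs.
-/

section Support

variable {α : Type*} {H : AddSubgroup (FreeAbelianGroup α)}

theorem exists_finset_support_subset_of_fg (hH : H.FG) :
    ∃ T : Finset α, ∀ a ∈ H, a.support ⊆ T := by
  classical
  obtain ⟨S, rfl⟩ := hH
  refine ⟨S.biUnion support, fun a ha => ?_⟩
  induction ha using AddSubgroup.closure_induction with
  | mem a ha => exact Finset.subset_biUnion_of_mem support ha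
  | zero => simp
  | add a b _ _ ha hb => exact (support_add a b).trans (Finset.union_subset ha hb)
  | neg a _ ha => rwa [support_neg]

theorem not_fg_of_forall_of_sub_of_mem {S : Set α} (hS : S.Infinite) (b : α)
    (hH : ∀ a ∈ S, of a - of b ∈ H) : ¬ H.FG := by
  classical
  intro hfg
  obtain ⟨T, hT⟩ := exists_finset_support_subset_of_fg hfg
  obtain ⟨a, haS, haT⟩ := hS.exists_notMem_finset (insert b T)
  obtain ⟨hab, haT⟩ : a ≠ b ∧ a ∉ T := by simpa only [Finset.mem_insert, not_or] using haT
  have ha : a ∈ (of a - of b).support := by simp [coeff, hab.symm]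
  exact haT (hT _ (hH a haS) ha)

end Support

theorem fg_range_of_fg_quotient {A B : Type*} [AddGroup A] [AddGroup B] {N : AddSubgroup A}
    [N.Normal] {f : A →+ B} (hN : N ≤ f.ker) (hfg : AddGroup.FG (A ⧸ N)) : f.range.FG := by
  have hrange : (QuotientAddGroup.lift N f hN).range = f.range := by
    rw [AddMonoidHom.range_eq_map, ← QuotientAddGroup.range_mk' N, ← AddMonoidHom.range_comp,
      QuotientAddGroup.lift_comp_mk']
  rw [← hrange, ← AddGroup.fg_iff_addSubgroup_fg]
  exact AddGroup.fg_range _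

section Bar

variable (G : Type*) [Group G]

theorem barD3_comp_barD4 : (barD3 G).comp (barD4 G) = 0 := by
  ext ⟨g₁, g₂, g₃, g₄⟩
  simp only [barD3, barD4, AddMonoidHom.comp_apply, lift_apply_of, map_add, map_sub, mul_assoc,
    AddMonoidHom.zero_apply]
  abel

theorem range_barD4_le_ker_barD3 : (barD4 G).range ≤ (barD3 G).ker :=
  (AddMonoidHom.range_le_ker_iff _ _).2 (barD3_comp_barD4 G)

variable {G} in
theorem barD3_of_one_one (g : G) : barD3 G (of (1, 1, g)) = of (1, g) - of (1, 1) := by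
  simp [barD3]

theorem not_fg_range_barD3 [Infinite G] : ¬ (barD3 G).range.FG := by
  have hpairs : (Set.range (Prod.mk (1 : G) : G → G × G)).Infinite :=
    Set.infinite_range_of_injective (Prod.mk_right_injective 1)
  refine not_fg_of_forall_of_sub_of_mem hpairs (1, 1) ?_
  rintro _ ⟨g, rfl⟩
  exact ⟨of (1, 1, g), barD3_of_one_one g⟩

end Bar

theorem stmt9_general (G : Type*) [Group G] [Infinite G] :
    ¬ AddGroup.FG (FreeAbelianGroup (G × G × G) ⧸ (barD4 G).range) := fun hfg =>
  not_fg_range_barD3 G (fg_range_of_fg_quotient (range_barD4_le_ker_barD3 G) hfg)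

/-- if `G` contains an element of infinite order and `H₂(G;ℤ)` is finitely
generated, then `B₃(G)/∂₄(B₄(G))` is not a finitely generated abelian group. -/
theorem stmt9 (G : Type*) [Group G] (x : G) (hx : ¬ IsOfFinOrder x)
    (hfg : AddGroup.FG (barH2 G)) :
    ¬ AddGroup.FG (FreeAbelianGroup (G × G × G) ⧸ (barD4 G).range) := by
  have : Infinite G := not_finite_iff_infinite.1 fun _ => hx (isOfFinOrder_of_finite x)
  exact stmt9_general G
end

section
/- Let A be an abelian group. For n ≥ 1 define SW_n : B_n(A) → ⋀ⁿ_ℚ(ℚ ⊗_ℤ A) on basis elements by SW_n(a₁|⋯|a_n) = (1/n!)·(1⊗a₁) ∧ ⋯ ∧ (1⊗a_n) (and let SW₀ : B₀(A) → ℚ send the empty tuple to 1). Then SW_{n−1} ∘ ∂_n = 0 for every n ≥ 1. In particular, each SW_n vanishes on the boundaries ∂_{n+1}(B_{n+1}(A)) and therefore induces a homomorphism H_n(A;ℤ) → ⋀ⁿ_ℚ(ℚ ⊗_ℤ A); equivalently, SW is a chain map from the bar complex of A to the Koszul complex of the abelian ℚ-Lie algebra ℚ ⊗_ℤ A, whose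 differential vanishes. -/
open scoped TensorProduct

/-- The degree-`n` bar chains of an (additive) group `A`: the free abelian group on
`n`-tuples of elements of `A`. -/
abbrev barChains (A : Type*) (n : ℕ) := FreeAbelianGroup (Fin n → A)

/-- The bar differential `∂_{n+1} : B_{n+1}(A) → B_n(A)` for an additive abelian group
`A` (group law written additively):
`∂(a₀|…|a_n) = (a₁|…|a_n) + Σ_{i} (−1)^{i+1} (a₀|…|a_i + a_{i+1}|…|a_n)
  + (−1)^{n+1} (a₀|…|a_{n−1})`. -/
def barDiff (A : Type*) [AddCommGroup A] (n : ℕ) :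
    barChains A (n + 1) →+ barChains A n :=
  FreeAbelianGroup.lift fun g =>
    FreeAbelianGroup.of (fun j : Fin n => g j.succ)
      + (∑ i : Fin n, ((-1 : ℤ) ^ ((i : ℕ) + 1)) •
          FreeAbelianGroup.of (fun j : Fin n =>
            if (j : ℕ) < (i : ℕ) then g j.castSucc
            else if j = i then g i.castSucc + g i.succ
            else g j.succ))
      + ((-1 : ℤ) ^ (n + 1)) • FreeAbelianGroup.of (fun j : Fin n => g j.castSucc)

/-- The Suslin–Wodzicki map in the abelian case:
`SW_n(a₁|…|a_n) = (1/n!)·(1⊗a₁) ∧ ⋯ ∧ (1⊗a_n)`, with values in the exterior algebra of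
the `ℚ`-vector space `ℚ ⊗_ℤ A` (wedges of `n` vectors span the `n`-th exterior power). -/
noncomputable def SW (A : Type*) [AddCommGroup A] (n : ℕ) :
    barChains A n →+ ExteriorAlgebra ℚ (ℚ ⊗[ℤ] A) :=
  FreeAbelianGroup.lift fun g =>
    ((n.factorial : ℚ)⁻¹) •
      (List.ofFn fun i : Fin n =>
        ExteriorAlgebra.ι ℚ ((1 : ℚ) ⊗ₜ[ℤ] g i)).prod

/-! The additive extension of any multiadditive map `f` to bar chains vanishes on boundaries. Write
`P k` for the value of `f` on the tuple with its `k`-th entry deleted. Additivity of `f` in the slot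
holding `a_i + a_{i+1}` turns the `i`-th inner face into `P (i + 1) + P i`, while the two outer
faces give `P 0` and `P n`, so the alternating sum telescopes to zero. -/

section Tuples

variable {α : Type*} {n : ℕ}

theorem contractNth_castSucc_eq_update (i : Fin n) (op : α → α → α) (g : Fin (n + 1) → α) :
    Fin.contractNth i.castSucc op g =
      Function.update (Fin.removeNth i.castSucc g) i (op (g i.castSucc) (g i.succ)) := by
  ext j
  obtain rfl | hji := eq_or_ne j i
  · rw [Function.update_self, Fin.contractNth_apply_of_eq _ _ _ _ rfl]
  · rw [Function.update_of_ne hji, Fin.removeNth_apply,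
      Fin.contractNth_apply_of_ne _ _ _ _ (Fin.val_ne_of_ne hji.symm)]

theorem removeNth_succ_eq_update (i : Fin n) (g : Fin (n + 1) → α) :
    Fin.removeNth i.succ g = Function.update (Fin.removeNth i.castSucc g) i (g i.castSucc) := by
  ext j
  obtain hji | rfl | hij := lt_trichotomy j i
  · rw [Function.update_of_ne hji.ne, Fin.removeNth_apply, Fin.removeNth_apply,
      Fin.succAbove_castSucc_of_lt _ _ hji, Fin.succAbove_succ_of_le _ _ hji.le]
  · rw [Function.update_self, Fin.removeNth_apply, Fin.succAbove_succ_self]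
  · rw [Function.update_of_ne hij.ne', Fin.removeNth_apply, Fin.removeNth_apply,
      Fin.succAbove_castSucc_of_le _ _ hij.le, Fin.succAbove_succ_of_lt _ _ hij]

end Tuples

theorem multilinearMap_contractNth_add {R A M : Type*} [Semiring R] [AddCommMonoid A] [Module R A]
    [AddCommMonoid M] [Module R M] {n : ℕ} (f : MultilinearMap R (fun _ : Fin n => A) M)
    (i : Fin n) (g : Fin (n + 1) → A) :
    f (Fin.contractNth i.castSucc (· + ·) g) =
      f (Fin.removeNth i.succ g) + f (Fin.removeNth i.castSucc g) := by
  have update_succ : Function.update (Fin.removeNth i.castSucc g) i (g i.succ) =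
      Fin.removeNth i.castSucc g := by
    rw [Function.update_eq_self_iff, Fin.removeNth_apply, Fin.succAbove_castSucc_self]
  rw [contractNth_castSucc_eq_update, f.map_update_add, ← removeNth_succ_eq_update, update_succ]

theorem sum_succ_sub_castSucc {M : Type*} [AddCommGroup M] {n : ℕ} (Q : Fin (n + 1) → M) :
    ∑ i : Fin n, (Q i.succ - Q i.castSucc) = Q (Fin.last n) - Q 0 := by
  rw [Finset.sum_sub_distrib, sub_eq_sub_iff_add_eq_add, add_comm, ← Fin.sum_univ_succ,
    Fin.sum_univ_castSucc, add_comm]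

theorem sum_neg_one_pow_smul_succ_add_castSucc {M : Type*} [AddCommGroup M] {n : ℕ}
    (P : Fin (n + 1) → M) :
    ∑ i : Fin n, (-1 : ℤ) ^ ((i : ℕ) + 1) • (P i.succ + P i.castSucc) =
      (-1 : ℤ) ^ n • P (Fin.last n) - P 0 := by
  have telescope := sum_succ_sub_castSucc fun k => (-1 : ℤ) ^ (k : ℕ) • P k
  simpa [pow_succ, smul_add, sub_eq_add_neg] using telescope

section BarComplex

variable {A : Type*} [AddCommGroup A] {n : ℕ}

theorem barDiff_of (g : Fin (n + 1) → A) :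
    barDiff A n (FreeAbelianGroup.of g) =
      FreeAbelianGroup.of (Fin.removeNth 0 g)
        + ∑ i : Fin n, (-1 : ℤ) ^ ((i : ℕ) + 1) •
            FreeAbelianGroup.of (Fin.contractNth i.castSucc (· + ·) g)
        + (-1 : ℤ) ^ (n + 1) • FreeAbelianGroup.of (Fin.removeNth (Fin.last n) g) := by
  have contractNth_eq_ite (i : Fin n) : Fin.contractNth i.castSucc (· + ·) g = fun j : Fin n =>
      if (j : ℕ) < (i : ℕ) then g j.castSucc
      else if j = i then g i.castSucc + g i.succ
      else g j.succ := by
    ext j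
    obtain rfl | hji := eq_or_ne j i
    · simp [Fin.contractNth]
    · simp [Fin.contractNth, hji, Fin.val_ne_of_ne hji]
  simp only [barDiff, FreeAbelianGroup.lift_apply_of, Fin.removeNth_zero, Fin.removeNth_last,
    Fin.tail_def, Fin.init_def, contractNth_eq_ite]

theorem lift_multilinearMap_comp_barDiff {R M : Type*} [Semiring R] [Module R A]
    [AddCommGroup M] [Module R M] (f : MultilinearMap R (fun _ : Fin n => A) M) :
    (FreeAbelianGroup.lift f).comp (barDiff A n) = 0 := by
  ext g
  simp only [AddMonoidHom.comp_apply, AddMonoidHom.zero_apply, barDiff_of, map_add, map_sum,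
    map_zsmul, FreeAbelianGroup.lift_apply_of, multilinearMap_contractNth_add]
  rw [sum_neg_one_pow_smul_succ_add_castSucc fun k => f (Fin.removeNth k g), add_sub_cancel,
    pow_succ', neg_one_mul, neg_smul, add_neg_cancel]

end BarComplex

/-- The multiadditive map `(a₁, …, a_n) ↦ (1/n!)·(1⊗a₁) ∧ ⋯ ∧ (1⊗a_n)` whose additive extension to
bar chains is `SW A n`. -/
noncomputable def swMultilinear (A : Type*) [AddCommGroup A] (n : ℕ) :
    MultilinearMap ℤ (fun _ : Fin n => A) (ExteriorAlgebra ℚ (ℚ ⊗[ℤ] A)) :=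
  (((n.factorial : ℚ)⁻¹ • ExteriorAlgebra.ιMulti ℚ n).toMultilinearMap.restrictScalars
    ℤ).compLinearMap fun _ => (TensorProduct.mk ℤ ℚ A 1).toAddMonoidHom.toIntLinearMap

theorem SW_eq_lift_swMultilinear (A : Type*) [AddCommGroup A] (n : ℕ) :
    SW A n = FreeAbelianGroup.lift (swMultilinear A n) := by
  ext g
  simp [SW, swMultilinear, ExteriorAlgebra.ιMulti_apply]

theorem SW_barDiff (A : Type*) [AddCommGroup A] (n : ℕ) (x : barChains A (n + 1)) :
    SW A n (barDiff A n x) = 0 := by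
  rw [SW_eq_lift_swMultilinear]
  exact DFunLike.congr_fun (lift_multilinearMap_comp_barDiff (swMultilinear A n)) x

/-- `SW₀` sends the empty tuple to `1`, and `SW_{n−1} ∘ ∂_n = 0` for all
`n ≥ 1`; in particular `SW` vanishes on boundaries, i.e. it is a chain map from the bar
complex of `A` to the Koszul complex of the abelian Lie algebra `ℚ ⊗_ℤ A` (whose
differential is zero). -/
theorem stmt13 (A : Type*) [AddCommGroup A] :
    (∀ g : Fin 0 → A, SW A 0 (FreeAbelianGroup.of g) = 1) ∧
    (∀ (n : ℕ) (x : barChains A (n + 1)), SW A n (barDiff A n x) = 0) ∧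
    (∀ (n : ℕ) (b : barChains A n), b ∈ (barDiff A n).range → SW A n b = 0) := by
  refine ⟨fun g => ?_, SW_barDiff A, ?_⟩
  · simp [SW]
  · rintro n _ ⟨x, rfl⟩
    exact SW_barDiff A n x
end
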